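/- Every ordered logic program (Π,<) has a unique preferred well-founded set: there exists exactly one set X of literals such that A°_{(Π,<)}(X)=X and X ⊆ Z for every set Z with A°_{(Π,<)}(Z)=Z; consequently every ordered logic program has a unique preferred well-founded model. -/

import Mathlib

open scoped Classical

/-- A literal: an atom `A` or its classical negation `¬A`. -/
inductive Lit (α : Type) : Type
  | pos : α → Lit α
  | neg : α → Lit α

/-- A rule with a head literal and finite positive and negative bodies. -/
structure Rule (α : Type) where
  head : Lit α
  pbody : Finset (Lit α)
  nbody : Finset (Lit α)

/-- A program is a set of rules (finiteness is stated as a hypothesis). -/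
abbrev Program (α : Type) := Set (Rule α)

/-- `X` is consistent if it contains no complementary pair. -/
def Consistent {α : Type} (X : Set (Lit α)) : Prop :=
  ¬ ∃ A : α, Lit.pos A ∈ X ∧ Lit.neg A ∈ X

/-- `X` is logically closed if it is consistent or equals the set of all literals. -/
def LogClosed {α : Type} (X : Set (Lit α)) : Prop :=
  Consistent X ∨ X = Set.univ

/-- `X` is closed under (basic) program `P`. -/
def ClosedUnder {α : Type} (P : Program α) (X : Set (Lit α)) : Prop :=
  ∀ r ∈ P, ↑r.pbody ⊆ X → r.head ∈ X

/-- `Cn P` : the smallest logically closed set closed under basic program `P`. -/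
def Cn {α : Type} (P : Program α) : Set (Lit α) :=
  ⋂₀ {X | LogClosed X ∧ ClosedUnder P X}

/-- The reduct of `P` relative to `X`. -/
def reduct {α : Type} (P : Program α) (X : Set (Lit α)) : Program α :=
  {s | ∃ r ∈ P, (↑r.nbody ∩ X = (∅ : Set (Lit α))) ∧ s = ⟨r.head, r.pbody, ∅⟩}

/-- A program is basic if all its rules have empty negative body. -/
def IsBasic {α : Type} (P : Program α) : Prop := ∀ r ∈ P, r.nbody = ∅

/-- `C_Π(X) = Cn(Π^X)`. -/
noncomputable def Cop {α : Type} (P : Program α) (X : Set (Lit α)) : Set (Lit α) :=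
  Cn (reduct P X)

/-- `A_Π(X) = C_Π(C_Π(X))`. -/
noncomputable def Aop {α : Type} (P : Program α) (X : Set (Lit α)) : Set (Lit α) :=
  Cop P (Cop P X)

/-- `X` is an answer set of `P` iff `Cn(P^X) = X`. -/
def AnswerSet {α : Type} (P : Program α) (X : Set (Lit α)) : Prop :=
  Cn (reduct P X) = X

/-- Immediate consequence operator for a basic program. -/
noncomputable def T {α : Type} (P : Program α) (X : Set (Lit α)) : Set (Lit α) :=
  if Consistent X then {L | ∃ r ∈ P, ↑r.pbody ⊆ X ∧ L = r.head} else Set.univ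

/-- `r` is active wrt `(X, Y)`. -/
def Active {α : Type} (r : Rule α) (X Y : Set (Lit α)) : Prop :=
  ↑r.pbody ⊆ X ∧ ↑r.nbody ∩ Y = (∅ : Set (Lit α))

/-- Extended immediate consequence operator `T_{Π,Y}(X)`. -/
noncomputable def TE {α : Type} (P : Program α) (Y X : Set (Lit α)) : Set (Lit α) :=
  if Consistent X then {L | ∃ r ∈ P, Active r X Y ∧ L = r.head} else Set.univ

/-- Preference-sensitive operator `T_{(Π,<),Y}(X)` (Definition 1). -/
noncomputable def TP {α : Type} (P : Program α) (lt : Rule α → Rule α → Prop)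
    (Y X : Set (Lit α)) : Set (Lit α) :=
  if Consistent X then
    {L | ∃ r ∈ P, Active r X Y ∧
      (¬ ∃ r' ∈ P, lt r r' ∧ Active r' Y X ∧ r'.head ∉ X) ∧ L = r.head}
  else Set.univ

/-- `C_{(Π,<)}(X)` (Definition 2). -/
noncomputable def CP {α : Type} (P : Program α) (lt : Rule α → Rule α → Prop)
    (X : Set (Lit α)) : Set (Lit α) :=
  ⋃ i : ℕ, (TP P lt X)^[i] ∅

/-- `A_{(Π,<)}(X) = C_{(Π,<)}(C_{(Π,<)}(X))`. -/
noncomputable def AP {α : Type} (P : Program α) (lt : Rule α → Rule α → Prop)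
    (X : Set (Lit α)) : Set (Lit α) :=
  CP P lt (CP P lt X)

/-- The set `D^r_{(X,Y)}` of removable literals. -/
def D {α : Type} (P : Program α) (lt : Rule α → Rule α → Prop) (r : Rule α)
    (X Y : Set (Lit α)) : Set (Lit α) :=
  {L | ∀ r' ∈ P, r'.head = L → ↑r'.pbody ⊆ Y →
      lt r' r ∧ ({r.head} ∪ X) ∩ ↑r'.nbody ≠ (∅ : Set (Lit α))}

/-- `T°_{(Π,<),Y}(X)` (Definition 3). -/
noncomputable def TN {α : Type} (P : Program α) (lt : Rule α → Rule α → Prop)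
    (Y X : Set (Lit α)) : Set (Lit α) :=
  if Consistent X then
    {L | ∃ r ∈ P, Active r X (Y \ D P lt r X Y) ∧ L = r.head}
  else Set.univ

/-- `C°_{(Π,<)}(X)` (Definition 4). -/
noncomputable def CN {α : Type} (P : Program α) (lt : Rule α → Rule α → Prop)
    (X : Set (Lit α)) : Set (Lit α) :=
  ⋃ i : ℕ, (TN P lt X)^[i] ∅

/-- `A°_{(Π,<)}(X) = C°_{(Π,<)}(C_Π(X))`. -/
noncomputable def AN {α : Type} (P : Program α) (lt : Rule α → Rule α → Prop)
    (X : Set (Lit α)) : Set (Lit α) :=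
  CN P lt (Cop P X)

/-!
Enlarging the context `Y` of `T°_{(Π,<),Y}` enlarges `Y ∖ D^r`, since more rules `r'` with
`pbody(r') ⊆ Y` compete to keep a literal out of `D^r`; so fewer rules become active. Enlarging the
argument `X` has the opposite effect: `pbody(r) ⊆ X` is easier to satisfy, `D^r` grows, and an
inconsistent `X` yields `Lit`. Hence `T°` is antitone in `Y` and monotone in `X`, so `C°` is
antitone. As `C_Π` is antitone too, `A°` is monotone, and the Knaster–Tarski theorem gives its least
fixpoint.
-/

theorem existsUnique_isLeast_fixedPoints {L : Type*} [CompleteLattice L] {f : L → L}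
    (hf : Monotone f) : ∃! x, IsLeast (Function.fixedPoints f) x := by
  have hlfp : IsLeast (Function.fixedPoints f) (OrderHom.lfp ⟨f, hf⟩) :=
    OrderHom.isLeast_lfp ⟨f, hf⟩
  exact ⟨_, hlfp, fun _ hx => hx.unique hlfp⟩

section Program

variable {α : Type} {X X' Y Y' : Set (Lit α)}

theorem Consistent.mono (hcons : Consistent X') (hXX' : X ⊆ X') : Consistent X :=
  fun ⟨A, hpos, hneg⟩ => hcons ⟨A, hXX' hpos, hXX' hneg⟩

theorem ClosedUnder.anti {P Q : Program α} (hQ : ClosedUnder Q X) (hPQ : P ⊆ Q) :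
    ClosedUnder P X :=
  fun r hr => hQ r (hPQ hr)

theorem Cn_monotone : Monotone (Cn (α := α)) :=
  fun _ _ hPQ => Set.sInter_subset_sInter fun _ ⟨hclosed, hQ⟩ => ⟨hclosed, hQ.anti hPQ⟩

theorem Active.mono {r : Rule α} (hr : Active r X Y') (hXX' : X ⊆ X') (hYY' : Y ⊆ Y') :
    Active r X' Y :=
  ⟨hr.1.trans hXX', Set.subset_eq_empty (Set.inter_subset_inter_right _ hYY') hr.2⟩

variable (P : Program α)

theorem reduct_antitone : Antitone (reduct P) := by
  rintro X X' hXX' _ ⟨r, hr, hdisj, rfl⟩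
  exact ⟨r, hr, Set.subset_eq_empty (Set.inter_subset_inter_right _ hXX') hdisj, rfl⟩

theorem Cop_antitone : Antitone (Cop P) :=
  Cn_monotone.comp_antitone (reduct_antitone P)

variable (lt : Rule α → Rule α → Prop)

theorem D_subset_D (r : Rule α) (hXX' : X ⊆ X') (hYY' : Y ⊆ Y') :
    D P lt r X Y' ⊆ D P lt r X' Y := by
  intro L hL r' hr' hhead hpbody
  obtain ⟨hlt, hblocked⟩ := hL r' hr' hhead (hpbody.trans hYY')
  have hinter : ({r.head} ∪ X) ∩ ↑r'.nbody ⊆ ({r.head} ∪ X') ∩ ↑r'.nbody :=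
    Set.inter_subset_inter_left _ (Set.union_subset_union_right _ hXX')
  exact ⟨hlt, fun hempty => hblocked (Set.subset_eq_empty hinter hempty)⟩

theorem TN_subset_TN (hXX' : X ⊆ X') (hYY' : Y ⊆ Y') : TN P lt Y' X ⊆ TN P lt Y X' := by
  by_cases hcons : Consistent X'
  · rw [TN, TN, if_pos (hcons.mono hXX'), if_pos hcons]
    rintro _ ⟨r, hr, hactive, rfl⟩
    have hdiff : Y \ D P lt r X' Y ⊆ Y' \ D P lt r X Y' :=
      Set.sdiff_subset_sdiff hYY' (D_subset_D P lt r hXX' hYY')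
    exact ⟨r, hr, hactive.mono hXX' hdiff, rfl⟩
  · rw [TN, TN, if_neg hcons]
    exact Set.subset_univ _

theorem TN_monotone (Y : Set (Lit α)) : Monotone (TN P lt Y) :=
  fun _ _ hXX' => TN_subset_TN P lt hXX' subset_rfl

theorem TN_antitone : Antitone (TN P lt) :=
  fun _ _ hYY' _ => TN_subset_TN P lt subset_rfl hYY'

theorem CN_antitone : Antitone (CN P lt) :=
  fun _ Y' hYY' => Set.iUnion_mono fun i =>
    (TN_monotone P lt Y').iterate_le_of_le (TN_antitone P lt hYY') i ∅

theorem AN_monotone : Monotone (AN P lt) :=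
  (CN_antitone P lt).comp (Cop_antitone P)

/-- `X` is the preferred well-founded set of `(P, lt)`: the least fixpoint of `A°_{(P, lt)}`. -/
def IsPreferredWellFoundedSet (X : Set (Lit α)) : Prop :=
  IsLeast (Function.fixedPoints (AN P lt)) X

/-- `M` is the preferred well-founded model of `(P, lt)`: the pair formed by a preferred
well-founded set `X` and the set of literals not in `C_P(X)`. -/
def IsPreferredWellFoundedModel (M : Set (Lit α) × Set (Lit α)) : Prop :=
  ∃ X, IsPreferredWellFoundedSet P lt X ∧ M = (X, Set.univ \ Cop P X)

theorem existsUnique_isPreferredWellFoundedSet : ∃! X, IsPreferredWellFoundedSet P lt X :=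
  existsUnique_isLeast_fixedPoints (AN_monotone P lt)

theorem existsUnique_isPreferredWellFoundedModel : ∃! M, IsPreferredWellFoundedModel P lt M := by
  obtain ⟨X, hX, hunique⟩ := existsUnique_isPreferredWellFoundedSet P lt
  refine ⟨(X, Set.univ \ Cop P X), ⟨X, hX, rfl⟩, ?_⟩
  rintro _ ⟨X', hX', rfl⟩
  rw [hunique X' hX']

theorem unique_preferred_wf_set_and_model_general :
    (∃! X, IsPreferredWellFoundedSet P lt X) ∧ (∃! M, IsPreferredWellFoundedModel P lt M) :=
  ⟨existsUnique_isPreferredWellFoundedSet P lt, existsUnique_isPreferredWellFoundedModel P lt⟩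

end Program

/-- Theorem 2 and Corollary 1: every ordered logic program has a
unique preferred well-founded set (the least fixpoint of `A°_{(Π,<)}`), and
consequently a unique preferred well-founded model. -/
theorem unique_preferred_wf_set_and_model {α : Type} (P : Program α)
    (hfin : P.Finite) (lt : Rule α → Rule α → Prop)
    (hirr : ∀ r, ¬ lt r r) (htrans : ∀ r₁ r₂ r₃, lt r₁ r₂ → lt r₂ r₃ → lt r₁ r₃) :
    (∃! X : Set (Lit α), AN P lt X = X ∧ ∀ Z, AN P lt Z = Z → X ⊆ Z) ∧
    (∃! M : Set (Lit α) × Set (Lit α), ∃ X : Set (Lit α),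
      (AN P lt X = X ∧ ∀ Z, AN P lt Z = Z → X ⊆ Z) ∧
      M = (X, Set.univ \ Cop P X)) :=
  unique_preferred_wf_set_and_model_general P lt
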